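/- arXiv:1505.06651 — 3 statements merged into one kernel-verified Lean document; each statement's English description precedes it below -/
import Mathlib

section
/- The formula Kh(p,q) ∧ Kh(p,r) → Kh(p, q∧r) is not valid: there exist a model M and a state s of M, with distinct proposition letters p, q, r, such that M,s ⊨ Kh(p,q) and M,s ⊨ Kh(p,r) but M,s ⊭ Kh(p, q∧r). -/
/-- Formulas of the language L_Kh. -/
inductive Formula (P : Type) : Type
  | top : Formula P
  | atom : P → Formula P
  | neg : Formula P → Formula P
  | and : Formula P → Formula P → Formula P
  | kh : Formula P → Formula P → Formula P

namespace Formula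

/-- ⊥ abbreviates ¬⊤. -/
def bot {P : Type} : Formula P := neg top

/-- φ → ψ abbreviates ¬(φ ∧ ¬ψ). -/
def imp {P : Type} (φ ψ : Formula P) : Formula P := neg (φ.and ψ.neg)

/-- φ ↔ ψ. -/
def iff_ {P : Type} (φ ψ : Formula P) : Formula P := (φ.imp ψ).and (ψ.imp φ)

/-- Uφ abbreviates Kh(¬φ, ⊥). -/
def U {P : Type} (φ : Formula P) : Formula P := kh (neg φ) bot

end Formula

/-- A model (ability map): a labelled transition system with a nonempty set
of states, transitions labelled by action symbols in `A`, and a valuation. -/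
structure Model (P A : Type) where
  S : Type
  ne : Nonempty S
  R : A → S → S → Prop
  V : S → Set P

namespace Model

/-- `runs M σ s t` means s →σ t. -/
def runs {P A : Type} (M : Model P A) : List A → M.S → M.S → Prop
  | [], s, t => s = t
  | a :: σ, s, t => ∃ u, M.R a s u ∧ M.runs σ u t

/-- σ = a₁…aₙ is strongly executable at s: for every k < n and every t
reached from s by the length-k prefix of σ, t has an a_{k+1}-successor. -/
def SE {P A : Type} (M : Model P A) (σ : List A) (s : M.S) : Prop :=
  ∀ (k : ℕ) (hk : k < σ.length) (t : M.S),
    M.runs (σ.take k) s t → ∃ u, M.R (σ.get ⟨k, hk⟩) t u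

end Model

/-- Truth of a formula at a state of a model. -/
def Sat {P A : Type} (M : Model P A) : Formula P → M.S → Prop
  | .top, _ => True
  | .atom p, s => p ∈ M.V s
  | .neg φ, s => ¬ Sat M φ s
  | .and φ ψ, s => Sat M φ s ∧ Sat M ψ s
  | .kh ψ φ, _ => ∃ σ : List A, ∀ s' : M.S, Sat M ψ s' →
      M.SE σ s' ∧ ∀ t : M.S, M.runs σ s' t → Sat M φ t

/-- Validity: truth at every state of every model (over a countable
nonempty set of action symbols). -/
def Valid {P : Type} (φ : Formula P) : Prop :=
  ∀ (A : Type) [Countable A] [Nonempty A] (M : Model P A) (s : M.S), Sat M φ s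

/-- Boolean evaluation of a formula, treating atoms and Kh-formulas as
propositional variables (used to define instances of propositional tautologies). -/
def evalB {P : Type} (v : Formula P → Bool) : Formula P → Bool
  | .top => true
  | .atom p => v (.atom p)
  | .neg φ => !(evalB v φ)
  | .and φ ψ => evalB v φ && evalB v ψ
  | .kh ψ φ => v (.kh ψ φ)

/-- Uniform substitution of formulas for proposition letters. -/
def subst {P : Type} (s : P → Formula P) : Formula P → Formula P
  | .top => .top
  | .atom p => s p
  | .neg φ => (subst s φ).neg
  | .and φ ψ => (subst s φ).and (subst s ψ)
  | .kh ψ φ => (subst s ψ).kh (subst s φ)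

/-- The proof system SKH. -/
inductive Derivable {P : Type} : Formula P → Prop
  /-- all instances of propositional tautologies -/
  | taut {φ : Formula P} : (∀ v : Formula P → Bool, evalB v φ = true) → Derivable φ
  /-- DISTU -/
  | distU (φ ψ : Formula P) : Derivable (((φ.U).and ((φ.imp ψ).U)).imp ψ.U)
  /-- COMPKh -/
  | compKh (φ ρ χ : Formula P) : Derivable (((φ.kh ρ).and (ρ.kh χ)).imp (φ.kh χ))
  /-- EMP -/
  | emp (φ χ : Formula P) : Derivable (((φ.imp χ).U).imp (φ.kh χ))
  /-- TU -/
  | tU (φ : Formula P) : Derivable ((φ.U).imp φ)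
  /-- 4KU -/
  | fourKU (φ χ : Formula P) : Derivable ((φ.kh χ).imp ((φ.kh χ).U))
  /-- 5KU -/
  | fiveKU (φ χ : Formula P) : Derivable (((φ.kh χ).neg).imp (((φ.kh χ).neg).U))
  /-- modus ponens -/
  | mp {φ ψ : Formula P} : Derivable (φ.imp ψ) → Derivable φ → Derivable ψ
  /-- NECU -/
  | necU {φ : Formula P} : Derivable φ → Derivable φ.U
  /-- SUB: uniform substitution -/
  | sub {φ : Formula P} (s : P → Formula P) : Derivable φ → Derivable (subst s φ)

/-- A set of formulas is SKH-consistent if no finite conjunction of its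
members proves ⊥ in SKH. -/
def Consistent {P : Type} (Γ : Set (Formula P)) : Prop :=
  ¬ ∃ l : List (Formula P), (∀ φ ∈ l, φ ∈ Γ) ∧
      Derivable ((l.foldr Formula.and Formula.top).imp Formula.bot)

/-- Maximal consistent set. -/
def MCS {P : Type} (Γ : Set (Formula P)) : Prop :=
  Consistent Γ ∧ ∀ Δ : Set (Formula P), Consistent Δ → Γ ⊆ Δ → Δ = Γ

/-- Δ|_Kh : the Kh-formulas in Δ. -/
def khPart {P : Type} (Δ : Set (Formula P)) : Set (Formula P) :=
  {χ | χ ∈ Δ ∧ ∃ ψ φ : Formula P, χ = ψ.kh φ}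

/-- The states S^c_Γ of the canonical model for Γ. -/
def canonStates {P : Type} (Γ : Set (Formula P)) : Set (Set (Formula P)) :=
  {Δ | MCS Δ ∧ khPart Δ = khPart Γ}

/-- The action symbols Σ_Γ of the canonical model: pairs ⟨ψ,φ⟩ with Kh(ψ,φ) ∈ Γ. -/
def SigmaGamma {P : Type} (Γ : Set (Formula P)) : Type :=
  {pr : Formula P × Formula P // (pr.1.kh pr.2) ∈ Γ}

/-- The canonical model M^c_Γ for a maximal consistent set Γ. -/
def canonicalModel {P : Type} (Γ : Set (Formula P)) (hΓ : MCS Γ) :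
    Model P (SigmaGamma Γ) where
  S := {Δ : Set (Formula P) // Δ ∈ canonStates Γ}
  ne := ⟨⟨Γ, hΓ, rfl⟩⟩
  R := fun a Δ Θ => a.val.1 ∈ Δ.val ∧ a.val.2 ∈ Θ.val
  V := fun Δ => {p | Formula.atom p ∈ Δ.val}

/-!
Since a strongly executable plan always ends somewhere, `Kh(ψ, φ)` together with a `ψ`-state forces
a `φ`-state to exist. It is therefore enough to find a model in which `q` and `r` can each be
reached from everywhere by an action of its own, while no state satisfies both. Take the letters
themselves as states, each satisfying only itself, with one action leading to `q` and another
to `r`.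
-/

namespace Model

variable {P A : Type} {M : Model P A} {a : A} {σ : List A} {s t u : M.S}

theorem runs_singleton : M.runs [a] s t ↔ M.R a s t := by
  simp only [runs, exists_eq_right]

theorem SE.exists_head (h : M.SE (a :: σ) s) : ∃ u, M.R a s u :=
  h 0 σ.length.succ_pos s rfl

theorem se_singleton : M.SE [a] s ↔ ∃ u, M.R a s u := by
  constructor
  · exact SE.exists_head
  · rintro h (_ | k) hk t ht
    · obtain rfl : s = t := ht
      exact h
    · exact absurd (Nat.succ_lt_succ_iff.mp hk) k.not_lt_zero

theorem SE.tail (h : M.SE (a :: σ) s) (hu : M.R a s u) : M.SE σ u :=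
  fun k hk t ht => h (k + 1) (Nat.succ_lt_succ hk) t ⟨u, hu, ht⟩

theorem SE.exists_runs (h : M.SE σ s) : ∃ t, M.runs σ s t := by
  induction σ generalizing s with
  | nil => exact ⟨s, rfl⟩
  | cons a σ ih =>
    obtain ⟨u, hu⟩ := h.exists_head
    obtain ⟨t, ht⟩ := ih (h.tail hu)
    exact ⟨t, u, hu, ht⟩

end Model

section Sat

variable {P A : Type} {M : Model P A} {φ ψ : Formula P} {s s' : M.S}

theorem sat_kh_of_action (a : A)
    (h : ∀ s', Sat M ψ s' → (∃ u, M.R a s' u) ∧ ∀ t, M.R a s' t → Sat M φ t) :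
    Sat M (ψ.kh φ) s :=
  ⟨[a], fun s' hs' => ⟨Model.se_singleton.mpr (h s' hs').1,
    fun t ht => (h s' hs').2 t (Model.runs_singleton.mp ht)⟩⟩

theorem exists_sat_of_sat_kh (h : Sat M (ψ.kh φ) s) (hψ : Sat M ψ s') : ∃ t, Sat M φ t := by
  obtain ⟨σ, hσ⟩ := h
  obtain ⟨hexec, hφ⟩ := hσ s' hψ
  obtain ⟨t, ht⟩ := hexec.exists_runs
  exact ⟨t, hφ t ht⟩

end Sat

/-- The jump model of `f : A → P`, used as the countermodel: its states are the proposition letters,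
the letter `x` is true only at the state `x`, and the action `a` leads from every state to `f a`. -/
def jumpModel {P A : Type} [Nonempty P] (f : A → P) : Model P A where
  S := P
  ne := inferInstance
  R a _ t := t = f a
  V s := {s}

section JumpModel

variable {P A : Type} [Nonempty P] {f : A → P}

theorem sat_jumpModel_atom {x : P} {s : (jumpModel f).S} :
    Sat (jumpModel f) (.atom x) s ↔ x = s :=
  Iff.rfl

theorem sat_jumpModel_kh_atom (ψ : Formula P) (a : A) (s : (jumpModel f).S) :
    Sat (jumpModel f) (ψ.kh (.atom (f a))) s :=
  sat_kh_of_action a fun _ _ => ⟨⟨f a, rfl⟩, fun _ ht => sat_jumpModel_atom.mpr (Eq.symm ht)⟩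

theorem not_sat_jumpModel_kh_and {ψ : Formula P} {q r : P} {s s' : (jumpModel f).S}
    (hψ : Sat (jumpModel f) ψ s') (hqr : q ≠ r) :
    ¬ Sat (jumpModel f) (ψ.kh ((Formula.atom q).and (.atom r))) s := by
  intro h
  obtain ⟨t, hq, hr⟩ := exists_sat_of_sat_kh h hψ
  exact hqr ((sat_jumpModel_atom.mp hq).trans (sat_jumpModel_atom.mp hr).symm)

end JumpModel

theorem kh_not_closed_under_conjunction_general {P : Type} (p : P) {q r : P} (hqr : q ≠ r) :
    ∃ M : Model P Bool, ∀ s : M.S,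
      Sat M ((Formula.atom p).kh (Formula.atom q)) s ∧
      Sat M ((Formula.atom p).kh (Formula.atom r)) s ∧
      ¬ Sat M ((Formula.atom p).kh ((Formula.atom q).and (Formula.atom r))) s := by
  have : Nonempty P := ⟨p⟩
  let target : Bool → P := fun b => bif b then q else r
  have hp : Sat (jumpModel target) (.atom p) p := sat_jumpModel_atom.mpr rfl
  exact ⟨jumpModel target, fun s => ⟨sat_jumpModel_kh_atom _ true s,
    sat_jumpModel_kh_atom _ false s, not_sat_jumpModel_kh_and hp hqr⟩⟩

/-- Kh(p,q) ∧ Kh(p,r) → Kh(p, q∧r) is not valid: there are a model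
M, a state s, and distinct proposition letters p, q, r with
M,s ⊨ Kh(p,q), M,s ⊨ Kh(p,r) but M,s ⊭ Kh(p, q∧r). -/
theorem kh_not_closed_under_conjunction :
    ∃ (P : Type) (p q r : P), p ≠ q ∧ p ≠ r ∧ q ≠ r ∧
      ∃ (A : Type) (_ : Countable A) (_ : Nonempty A) (M : Model P A) (s : M.S),
        Sat M ((Formula.atom p).kh (Formula.atom q)) s ∧
        Sat M ((Formula.atom p).kh (Formula.atom r)) s ∧
        ¬ Sat M ((Formula.atom p).kh ((Formula.atom q).and (Formula.atom r))) s := by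
  obtain ⟨M, hM⟩ :=
    kh_not_closed_under_conjunction_general (0 : Fin 3) (q := 1) (r := 2) (by decide)
  exact ⟨Fin 3, 0, 1, 2, by decide, by decide, by decide, Bool, inferInstance, inferInstance,
    M, M.ne.some, hM M.ne.some⟩
end

section
/- The proof system SKH is sound: for every formula φ of L_Kh, if ⊢ φ in SKH then φ is valid, i.e., true at every state of every model. -/
/-!
Truth of `Kh(ψ, φ)` says that `⟦ψ⟧` is included in the strong precondition of `⟦φ⟧` under some
plan `σ`. Strong preconditions turn concatenation of plans into composition, which gives COMPKh.
A plan that is strongly executable at a state can be run to its end there, so the strong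
precondition of `∅` is empty; hence `U` is the universal modality, and the remaining modal axioms
are immediate. Substitution changes only the valuation, hence no strong precondition, so
truth of a substitution instance of `φ` is truth of `φ` under another valuation on the same
transition system.
-/

namespace Model

variable {P A : Type} (M : Model P A)

theorem se_nil (s : M.S) : M.SE [] s :=
  fun _ hk => absurd hk (Nat.not_lt_zero _)

theorem se_cons (a : A) (σ : List A) (s : M.S) :
    M.SE (a :: σ) s ↔ (∃ u, M.R a s u) ∧ ∀ u, M.R a s u → M.SE σ u := by
  constructor
  · intro h
    exact ⟨h 0 (Nat.zero_lt_succ _) s rfl,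
      fun u hsu k hk t hut => h (k + 1) (Nat.succ_lt_succ hk) t ⟨u, hsu, hut⟩⟩
  · rintro ⟨hstep, htail⟩ (_ | k) hk t hst
    · obtain rfl : s = t := hst
      exact hstep
    · obtain ⟨u, hsu, hut⟩ := hst
      exact htail u hsu k (Nat.lt_of_succ_lt_succ hk) t hut

/-- The strong precondition of `Y` under the plan `σ`: the states at which `σ` is strongly
executable and from which every complete run of `σ` ends in `Y`. It is the part of the semantics
of `Kh` that follows the choice of the plan. -/
def strongPre (σ : List A) (Y : Set M.S) : Set M.S :=
  {s | M.SE σ s ∧ ∀ t, M.runs σ s t → t ∈ Y}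

theorem strongPre_nil (Y : Set M.S) : M.strongPre [] Y = Y := by
  ext s
  constructor
  · rintro ⟨-, hY⟩
    exact hY s rfl
  · intro hs
    exact ⟨M.se_nil s, fun t hst => (show s = t from hst) ▸ hs⟩

theorem strongPre_cons (a : A) (σ : List A) (Y : Set M.S) :
    M.strongPre (a :: σ) Y =
      {s | (∃ u, M.R a s u) ∧ ∀ u, M.R a s u → u ∈ M.strongPre σ Y} := by
  ext s
  simp only [strongPre, Set.mem_ofPred_eq, se_cons, runs]
  constructor
  · rintro ⟨⟨hstep, htail⟩, hY⟩
    exact ⟨hstep, fun u hsu => ⟨htail u hsu, fun t hut => hY t ⟨u, hsu, hut⟩⟩⟩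
  · rintro ⟨hstep, htail⟩
    exact ⟨⟨hstep, fun u hsu => (htail u hsu).1⟩,
      fun t ⟨u, hsu, hut⟩ => (htail u hsu).2 t hut⟩

theorem strongPre_append (σ τ : List A) (Y : Set M.S) :
    M.strongPre (σ ++ τ) Y = M.strongPre σ (M.strongPre τ Y) := by
  induction σ with
  | nil => rw [List.nil_append, strongPre_nil]
  | cons a σ ih => rw [List.cons_append, strongPre_cons, strongPre_cons, ih]

theorem strongPre_mono (σ : List A) : Monotone (M.strongPre σ) :=
  fun _ _ hYZ _ ⟨hSE, hY⟩ => ⟨hSE, fun t hst => hYZ (hY t hst)⟩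

theorem strongPre_empty (σ : List A) : M.strongPre σ ∅ = ∅ := by
  induction σ with
  | nil => exact M.strongPre_nil ∅
  | cons a σ ih =>
    rw [strongPre_cons, ih, Set.eq_empty_iff_forall_notMem]
    rintro s ⟨⟨u, hsu⟩, htail⟩
    exact htail u hsu

/-- The model with the same transition system as `M` and valuation `V`; it interprets uniform
substitution semantically. -/
abbrev withValuation (V : M.S → Set P) : Model P A := { M with V := V }

theorem strongPre_withValuation (V : M.S → Set P) (σ : List A) (Y : Set M.S) :
    (M.withValuation V).strongPre σ Y = M.strongPre σ Y := by
  induction σ with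
  | nil => rw [strongPre_nil, strongPre_nil]
  | cons a σ ih => rw [strongPre_cons, strongPre_cons, ih]

end Model

section Satisfaction

variable {P A : Type} {M : Model P A} {φ ψ χ : Formula P} {s : M.S}

theorem sat_imp : Sat M (φ.imp ψ) s ↔ (Sat M φ s → Sat M ψ s) := by
  simp only [Formula.imp, Sat, not_and, not_not]

theorem sat_kh :
    Sat M (ψ.kh φ) s ↔ ∃ σ, {t | Sat M ψ t} ⊆ M.strongPre σ {t | Sat M φ t} :=
  Iff.rfl

theorem sat_U : Sat M φ.U s ↔ ∀ t, Sat M φ t := by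
  have setOf_sat_bot : {t | Sat M Formula.bot t} = ∅ := by
    simp only [Formula.bot, Sat, not_true_eq_false, Set.ofPred_false]
  simp only [Formula.U, sat_kh, setOf_sat_bot, M.strongPre_empty, exists_const,
    Set.subset_empty_iff, Set.eq_empty_iff_forall_notMem, Set.mem_ofPred_eq, Sat, not_not]

theorem sat_kh_of_forall_imp (h : ∀ t, Sat M φ t → Sat M ψ t) : Sat M (φ.kh ψ) s :=
  sat_kh.2 ⟨[], (M.strongPre_nil _).symm ▸ h⟩

theorem sat_kh_trans (hφψ : Sat M (φ.kh ψ) s) (hψχ : Sat M (ψ.kh χ) s) :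
    Sat M (φ.kh χ) s := by
  obtain ⟨σ, hσ⟩ := sat_kh.1 hφψ
  obtain ⟨τ, hτ⟩ := sat_kh.1 hψχ
  refine sat_kh.2 ⟨σ ++ τ, ?_⟩
  calc {t | Sat M φ t}
      ⊆ M.strongPre σ {t | Sat M ψ t} := hσ
    _ ⊆ M.strongPre σ (M.strongPre τ {t | Sat M χ t}) := M.strongPre_mono σ hτ
    _ = M.strongPre (σ ++ τ) {t | Sat M χ t} := (M.strongPre_append σ τ _).symm

open Classical in
theorem evalB_decide_sat (M : Model P A) (s : M.S) (φ : Formula P) :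
    evalB (fun χ => decide (Sat M χ s)) φ = true ↔ Sat M φ s := by
  induction φ with
  | top => simp only [evalB, Sat]
  | atom p => exact decide_eq_true_iff
  | neg φ ih => simp only [evalB, Sat, ← ih, Bool.not_eq_true, Bool.not_eq_true']
  | and φ ψ ihφ ihψ => simp only [evalB, Sat, Bool.and_eq_true, ihφ, ihψ]
  | kh ψ φ => exact decide_eq_true_iff

theorem sat_of_tautology (h : ∀ v : Formula P → Bool, evalB v φ = true) : Sat M φ s :=
  (evalB_decide_sat M s φ).1 (h _)

theorem sat_subst (M : Model P A) (f : P → Formula P) (φ : Formula P) (s : M.S) :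
    Sat M (subst f φ) s ↔ Sat (M.withValuation fun t => {p | Sat M (f p) t}) φ s := by
  induction φ generalizing s with
  | top => rfl
  | atom p => rfl
  | neg φ ih => exact not_congr (ih s)
  | and φ ψ ihφ ihψ => exact and_congr (ihφ s) (ihψ s)
  | kh ψ φ ihψ ihφ =>
    simp only [subst, sat_kh, ihψ, ihφ, M.strongPre_withValuation]

end Satisfaction

theorem skh_sound_general {P A : Type} (M : Model P A) {φ : Formula P} (h : Derivable φ)
    (s : M.S) : Sat M φ s := by
  induction h generalizing M with
  | taut h => exact sat_of_tautology h
  | distU φ ψ =>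
    refine sat_imp.2 fun ⟨hφ, hφψ⟩ => sat_U.2 fun t => ?_
    exact sat_imp.1 (sat_U.1 hφψ t) (sat_U.1 hφ t)
  | compKh φ ρ χ => exact sat_imp.2 fun ⟨hφρ, hρχ⟩ => sat_kh_trans hφρ hρχ
  | emp φ χ => exact sat_imp.2 fun h => sat_kh_of_forall_imp fun t => sat_imp.1 (sat_U.1 h t)
  | tU φ => exact sat_imp.2 fun h => sat_U.1 h s
  -- The truth value of a `Kh` formula does not depend on the state.
  | fourKU φ χ => exact sat_imp.2 fun h => sat_U.2 fun _ => h
  | fiveKU φ χ => exact sat_imp.2 fun h => sat_U.2 fun _ => h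
  | mp _ _ ihφψ ihφ => exact sat_imp.1 (ihφψ M s) (ihφ M s)
  | necU _ ih => exact sat_U.2 (ih M)
  | sub f _ ih => exact (sat_subst M f _ s).2 (ih _ _)

/-- the proof system SKH is sound: every SKH-derivable formula
is valid, i.e., true at every state of every model. -/
theorem skh_sound {P : Type} (φ : Formula P) (h : Derivable φ) : Valid φ :=
  fun _ _ _ M s => skh_sound_general M h s
end

section
/- The formula PREKh is derivable in SKH: for all formulas φ, χ of L_Kh, ⊢ Kh(Kh(φ,χ) ∧ φ, χ). -/
/-!
Argue by cases on `Kh(φ, χ)`. If it holds, then `Kh(φ, χ) ∧ φ` is a stronger precondition than `φ`,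
and EMP and COMPKh give the claim. If it fails, then by 5KU it fails globally, so the precondition
`Kh(φ, χ) ∧ φ` holds nowhere and EMP applies vacuously.
-/

theorem evalB_imp_eq_true {P : Type} (v : Formula P → Bool) (φ ψ : Formula P) :
    evalB v (φ.imp ψ) = true ↔ (evalB v φ = true → evalB v ψ = true) := by
  cases hφ : evalB v φ <;> simp [Formula.imp, evalB, hφ]

namespace Derivable

variable {P : Type} {φ ψ ρ χ : Formula P}

theorem imp_of_evalB (h : ∀ v, evalB v φ = true → evalB v ψ = true) : Derivable (φ.imp ψ) :=
  taut fun v => (evalB_imp_eq_true v φ ψ).2 (h v)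

theorem of_evalB₂ (h : ∀ v, evalB v φ = true → evalB v ψ = true → evalB v χ = true)
    (hφ : Derivable φ) (hψ : Derivable ψ) : Derivable χ :=
  have hφψχ : Derivable (φ.imp (ψ.imp χ)) :=
    imp_of_evalB fun v hv => (evalB_imp_eq_true v ψ χ).2 (h v hv)
  (hφψχ.mp hφ).mp hψ

theorem imp_trans (hφψ : Derivable (φ.imp ψ)) (hψχ : Derivable (ψ.imp χ)) :
    Derivable (φ.imp χ) :=
  of_evalB₂ (fun v => by simp only [evalB_imp_eq_true]; tauto) hφψ hψχ

theorem of_imp_of_neg_imp (hpos : Derivable (φ.imp ψ)) (hneg : Derivable (φ.neg.imp ψ)) :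
    Derivable ψ :=
  of_evalB₂ (fun v => by cases hφ : evalB v φ <;> simp [evalB_imp_eq_true, evalB, hφ]) hpos hneg

theorem imp_of_and_imp_of_left (h : Derivable ((φ.and ψ).imp χ)) (hφ : Derivable φ) :
    Derivable (ψ.imp χ) :=
  of_evalB₂ (fun v => by simp only [evalB_imp_eq_true, evalB, Bool.and_eq_true]; tauto) h hφ

theorem imp_of_and_imp_of_right (h : Derivable ((φ.and ψ).imp χ)) (hψ : Derivable ψ) :
    Derivable (φ.imp χ) :=
  of_evalB₂ (fun v => by simp only [evalB_imp_eq_true, evalB, Bool.and_eq_true]; tauto) h hψ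

theorem and_imp_right (φ ψ : Formula P) : Derivable ((φ.and ψ).imp ψ) :=
  imp_of_evalB fun v => by simp only [evalB, Bool.and_eq_true]; exact And.right

theorem neg_imp_and_imp (φ ψ χ : Formula P) : Derivable (φ.neg.imp ((φ.and ψ).imp χ)) :=
  imp_of_evalB fun v => by simp +contextual [evalB_imp_eq_true, evalB]

theorem U_imp_U_of_imp (h : Derivable (φ.imp ψ)) : Derivable (φ.U.imp ψ.U) :=
  imp_of_and_imp_of_right (distU φ ψ) h.necU

theorem U_imp_kh_of_imp_imp (h : Derivable (ρ.imp (φ.imp χ))) : Derivable (ρ.U.imp (φ.kh χ)) :=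
  (U_imp_U_of_imp h).imp_trans (emp φ χ)

theorem kh_of_imp (h : Derivable (φ.imp χ)) : Derivable (φ.kh χ) :=
  (emp φ χ).mp h.necU

theorem kh_imp_kh_of_imp_left (h : Derivable (ψ.imp φ)) (χ : Formula P) :
    Derivable ((φ.kh χ).imp (ψ.kh χ)) :=
  imp_of_and_imp_of_left (compKh ψ φ χ) (kh_of_imp h)

theorem neg_kh_imp_kh_kh_and (φ χ ψ ρ : Formula P) :
    Derivable ((φ.kh χ).neg.imp (((φ.kh χ).and ψ).kh ρ)) :=
  (fiveKU φ χ).imp_trans (U_imp_kh_of_imp_imp (neg_imp_and_imp (φ.kh χ) ψ ρ))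

end Derivable

/-- PREKh is derivable in SKH: ⊢ Kh(Kh(φ,χ) ∧ φ, χ). -/
theorem prekh_derivable {P : Type} (φ χ : Formula P) :
    Derivable (((φ.kh χ).and φ).kh χ) :=
  have hpos : Derivable ((φ.kh χ).imp (((φ.kh χ).and φ).kh χ)) :=
    .kh_imp_kh_of_imp_left (.and_imp_right (φ.kh χ) φ) χ
  have hneg : Derivable ((φ.kh χ).neg.imp (((φ.kh χ).and φ).kh χ)) :=
    .neg_kh_imp_kh_kh_and φ χ φ χ
  hpos.of_imp_of_neg_imp hneg
end
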